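/- For the DeGroot-Friedkin system with dynamic topology and relaxed initial conditions, interiority holds after one step: for any switching signal σ : ℕ → {1,…,P} and any initial condition x(0) ∈ ℝ^n with 0 ≤ x_i(0) < 1 for all i and x_j(0) > 0 for at least one j, the trajectory x(s+1) = F_{σ(s)}(x(s)) satisfies x(s) ∈ int(Δ_n) for all s ≥ 1 (i.e., x_i(s) > 0 for all i and ∑_i x_i(s) = 1). Moreover, for the extended maps with F̄_p(e_i) = e_i, if x(0) = e_i for some i then x(s) = e_i for all s. -/

import Mathlib

/-!
The map `DF γ` divides the vector with entries `γ i / (1 - x i)` by the sum of its entries. When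
`γ` is positive and every `x i < 1`, these entries are positive, so the image lies in the interior
of the simplex. As `n ≥ 2`, a point of the interior has all its coordinates below `1`, so it lies
in the domain of the next map and interiority propagates along the trajectory. A trajectory that
starts at a vertex stays there because every extended map fixes the vertices.
-/

open Finset

/-- The DeGroot-Friedkin map: `F(x)_i = α(x) · γ_i/(1 - x_i)` with
`α(x) = (∑_j γ_j/(1 - x_j))⁻¹`. -/
noncomputable def DF {n : ℕ} (γ : Fin n → ℝ) (x : Fin n → ℝ) : Fin n → ℝ :=
  fun i => (∑ j, γ j / (1 - x j))⁻¹ * (γ i / (1 - x i))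

/-- The simplex Δₙ. -/
def simplex (n : ℕ) : Set (Fin n → ℝ) := {x | (∀ i, 0 ≤ x i) ∧ ∑ i, x i = 1}

/-- The interior int(Δₙ) of the simplex. -/
def intSimplex (n : ℕ) : Set (Fin n → ℝ) := {x | (∀ i, 0 < x i) ∧ ∑ i, x i = 1}

/-- The standard basis vector (vertex of the simplex) eᵢ. -/
def vertex {n : ℕ} (i : Fin n) : Fin n → ℝ := fun j => if j = i then 1 else 0

/-- The punctured simplex Δ̃ₙ = Δₙ \ {e₁, …, eₙ}. -/
def punctSimplex (n : ℕ) : Set (Fin n → ℝ) := simplex n \ (⋃ i, {vertex i})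

/-- The 1-norm ‖x‖₁ = ∑ i, |x i|. -/
noncomputable def norm1 {n : ℕ} (x : Fin n → ℝ) : ℝ := ∑ i, |x i|

lemma DF_mem_intSimplex {n : ℕ} (hn : 0 < n) {γ x : Fin n → ℝ} (hγ : ∀ i, 0 < γ i)
    (hx : ∀ i, x i < 1) : DF γ x ∈ intSimplex n := by
  have hpos : ∀ i, 0 < γ i / (1 - x i) := fun i => div_pos (hγ i) (sub_pos.2 (hx i))
  have hsum : 0 < ∑ j, γ j / (1 - x j) :=
    Finset.sum_pos (fun i _ => hpos i) ⟨⟨0, hn⟩, Finset.mem_univ _⟩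
  refine ⟨fun i => mul_pos (inv_pos.2 hsum) (hpos i), ?_⟩
  simp only [DF]
  rw [← Finset.mul_sum, inv_mul_cancel₀ hsum.ne']

lemma lt_one_of_mem_intSimplex {n : ℕ} (hn : 2 ≤ n) {x : Fin n → ℝ} (hx : x ∈ intSimplex n)
    (i : Fin n) : x i < 1 := by
  obtain ⟨hpos, hsum⟩ := hx
  have : Nontrivial (Fin n) := Fin.nontrivial_iff_two_le.2 hn
  obtain ⟨j, hj⟩ := exists_ne i
  rw [← hsum]
  exact Finset.single_lt_sum hj (Finset.mem_univ i) (Finset.mem_univ j) (hpos j)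
    (fun k _ _ => (hpos k).le)

/-- for the switching system with relaxed initial conditions
(entries in [0,1), at least one positive), the trajectory lies in int(Δₙ) for
all s ≥ 1; moreover, for the extended maps F̄_p (equal to F_p on U and fixing
each vertex), if x(0) = eᵢ then x(s) = eᵢ for all s. -/
theorem stmt15 {n P : ℕ} (hn : 3 ≤ n) (hP : 1 ≤ P)
    (γ : Fin P → Fin n → ℝ)
    (hγpos : ∀ p i, 0 < γ p i) (hγsum : ∀ p, ∑ i, γ p i = 1)
    (hγhalf : ∀ p i, γ p i < 1 / 2)
    (Fbar : Fin P → (Fin n → ℝ) → (Fin n → ℝ))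
    (hFbarU : ∀ p, ∀ x : Fin n → ℝ, (∀ i, x i < 1) → Fbar p x = DF (γ p) x)
    (hFbarV : ∀ p, ∀ i : Fin n, Fbar p (vertex i) = vertex i) :
    ∀ σ : ℕ → Fin P, ∀ x : ℕ → Fin n → ℝ,
      (∀ s, x (s + 1) = Fbar (σ s) (x s)) →
      (((∀ i, 0 ≤ x 0 i) ∧ (∀ i, x 0 i < 1) ∧ (∃ j, 0 < x 0 j)) →
          ∀ s, 1 ≤ s → x s ∈ intSimplex n) ∧
      (∀ i : Fin n, x 0 = vertex i → ∀ s, x s = vertex i) := by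
  intro σ x hstep
  refine ⟨?_, ?_⟩
  · rintro ⟨-, hlt, -⟩ s hs
    have step : ∀ s, (∀ i, x s i < 1) → x (s + 1) ∈ intSimplex n := fun s h => by
      rw [hstep, hFbarU _ _ h]
      exact DF_mem_intSimplex (by omega) (hγpos _) h
    induction s, hs using Nat.le_induction with
    | base => exact step 0 hlt
    | succ s _ ih => exact step s (lt_one_of_mem_intSimplex (by omega) ih)
  · intro i h0 s
    induction s with
    | zero => exact h0
    | succ s ih => rw [hstep, ih, hFbarV]
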